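/- Let Γ be a generalised hexagon of finite order (s,t) with s > 1 and t > 1, and let S be a set of s+1 points of Γ such that no point of Γ is opposite every member of S. Suppose no two points of S are collinear. If S contains a pair of opposite points, then no two points of S are special. -/

import Mathlib

/-- An incidence structure of points and lines, each line being a set of points. -/
structure GenHexagon where
  Point : Type
  Line : Type
  pts : Line → Set Point

namespace GenHexagon

variable (Γ : GenHexagon)

/-- Adjacency of the bipartite incidence graph on the disjoint union of points and lines:
a point is adjacent to a line iff the point lies on the line. -/
def incAdj : Γ.Point ⊕ Γ.Line → Γ.Point ⊕ Γ.Line → Prop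
  | Sum.inl x, Sum.inr L => x ∈ Γ.pts L
  | Sum.inr L, Sum.inl x => x ∈ Γ.pts L
  | _, _ => False

/-- The bipartite incidence graph. -/
def incGraph : SimpleGraph (Γ.Point ⊕ Γ.Line) where
  Adj := Γ.incAdj
  symm := ⟨by rintro (x | L) (y | M) h <;> simp_all [incAdj]⟩
  loopless := ⟨by rintro (x | L) h <;> simp_all [incAdj]⟩

/-- `Γ` is a generalised hexagon: its incidence graph has diameter `6` and girth `12`. -/
def IsGenHexagon : Prop :=
  Γ.incGraph.ediam = 6 ∧ Γ.incGraph.egirth = 12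

/-- Two points are collinear if they are distinct and some line contains both. -/
def Collinear (x y : Γ.Point) : Prop :=
  x ≠ y ∧ ∃ L, x ∈ Γ.pts L ∧ y ∈ Γ.pts L

/-- Two points are special if they are distinct, non-collinear, and collinear
to a common point. -/
def Special (x y : Γ.Point) : Prop :=
  x ≠ y ∧ ¬ Γ.Collinear x y ∧ ∃ z, Γ.Collinear x z ∧ Γ.Collinear y z

/-- Two points are opposite if they are distinct, non-collinear and non-special. -/
def Opposite (x y : Γ.Point) : Prop :=
  x ≠ y ∧ ¬ Γ.Collinear x y ∧ ¬ Γ.Special x y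

/-- `Γ` has order `(s, t)`: every line contains exactly `s + 1` points and every
point lies on exactly `t + 1` lines. -/
def HasOrder (s t : ℕ) : Prop :=
  (∀ L, (Γ.pts L).encard = s + 1) ∧ (∀ x, {L | x ∈ Γ.pts L}.encard = t + 1)

/-- `Γ` is thick: every line contains at least `3` points and every point lies on
at least `3` lines. -/
def Thick : Prop :=
  (∀ L, 3 ≤ (Γ.pts L).encard) ∧ (∀ x, 3 ≤ {L | x ∈ Γ.pts L}.encard)

/-- A point is close to a line if it is collinear to exactly one point of that line. -/
def CloseTo (x : Γ.Point) (L : Γ.Line) : Prop :=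
  ∃! y, y ∈ Γ.pts L ∧ Γ.Collinear x y

/-- Two lines are opposite if they are disjoint and no point of one is collinear to
a point of the other. -/
def OppLines (L M : Γ.Line) : Prop :=
  (∀ x ∈ Γ.pts L, x ∉ Γ.pts M) ∧
  (∀ x ∈ Γ.pts L, ∀ y ∈ Γ.pts M, ¬ Γ.Collinear x y)

/-- The distance-3 trace `[L,M]₃` of two (opposite) lines: the set of points close to
both `L` and `M`. -/
def trace3 (L M : Γ.Line) : Set Γ.Point :=
  {x | Γ.CloseTo x L ∧ Γ.CloseTo x M}

/-- The distance-3 trace `[L,M]₃` is regular if `[N,M]₃ = [L,M]₃` for every line `N`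
opposite `M` such that `[N,M]₃` and `[L,M]₃` share at least two points. -/
def RegularTrace3 (L M : Γ.Line) : Prop :=
  ∀ N, Γ.OppLines N M → (Γ.trace3 N M ∩ Γ.trace3 L M).Nontrivial →
    Γ.trace3 N M = Γ.trace3 L M

/-- A hyperbolic line: a set `H` of pairwise special points, all collinear to a common
point `p`, such that for every point `q` opposite `p` to which at least two points of `H`
are special, the set of points special to `q` and collinear to `p` equals `H`. -/
def IsHyperbolicLine (H : Set Γ.Point) : Prop :=
  (∀ x ∈ H, ∀ y ∈ H, x ≠ y → Γ.Special x y) ∧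
  ∃ p, (∀ x ∈ H, Γ.Collinear x p) ∧
    ∀ q, Γ.Opposite q p → {x ∈ H | Γ.Special q x}.Nontrivial →
      {x | Γ.Special q x ∧ Γ.Collinear x p} = H

/-- A round-up triple: no point of `Γ` is opposite exactly one of `x₁, x₂, x₃`. -/
def RoundUpTriple (x₁ x₂ x₃ : Γ.Point) : Prop :=
  ∀ y : Γ.Point,
    ¬ ((Γ.Opposite y x₁ ∧ ¬ Γ.Opposite y x₂ ∧ ¬ Γ.Opposite y x₃) ∨
       (¬ Γ.Opposite y x₁ ∧ Γ.Opposite y x₂ ∧ ¬ Γ.Opposite y x₃) ∨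
       (¬ Γ.Opposite y x₁ ∧ ¬ Γ.Opposite y x₂ ∧ Γ.Opposite y x₃))

/-- A geometric line: a set `T` of points such that each point of `Γ` is either opposite
no member of `T`, or non-opposite to exactly one member of `T`. -/
def IsGeometricLine (T : Set Γ.Point) : Prop :=
  ∀ y : Γ.Point, (∀ x ∈ T, ¬ Γ.Opposite y x) ∨ (∃! x, x ∈ T ∧ ¬ Γ.Opposite y x)

end GenHexagon

/-!
Suppose that `S` contains both a special and an opposite pair. If no member of `S` lies on a
line `M`, then at most one member of `S` is at distance `3` from `M`: otherwise, since the `s + 1`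
points of a line need `s + 1` members of `S` to block them, all of `S` is at distance `3` from `M`,
with distinct projections, and no pair is special. Hence the lines that meet `S`, with the points
on at least two of them and `S` itself, form a subhexagon, and the opposite pair gives it an order
`(a, t)` with `a > 1`. Each of its lines has exactly one point in `S`, so it has `(s + 1)(t + 1)`
lines, which means that `s = a t + (a t)²`. By the theorem of Feit and Higman, applied to both
hexagons, `a t` and `s t` are squares. But `s t = t² a (1 + a t)`, so the coprime factors `a t + 1`
and `a` would be squares, although `a t` is a square too.
-/

theorem encard_neighborSet_induce {V : Type*} (G : SimpleGraph V) {W : Set V} (v : W) :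
    ((G.induce W).neighborSet v).encard = (G.neighborSet v ∩ W).encard := by
  rw [← Subtype.val_injective.encard_image]
  congr 1
  ext w
  simp [and_comm]

theorem exists_mem_ne_ne_of_three_le_encard {α : Type*} {A : Set α} (hA : 3 ≤ A.encard) (a b : α) :
    ∃ x ∈ A, x ≠ a ∧ x ≠ b := by
  by_contra! h
  have hsub : A ⊆ {a, b} := fun x hx => by grind
  have := hA.trans ((Set.encard_le_encard hsub).trans (Set.encard_insert_le {b} a))
  norm_num [Set.encard_singleton] at this

section Paths

variable {V : Type*} {G : SimpleGraph V} {u v w : V}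

/-- `w` is a projection of `u` on `v`: a neighbour of `v` preceding `v` on a geodesic from `u`. -/
def IsProj (G : SimpleGraph V) (u v w : V) : Prop :=
  G.Adj v w ∧ G.dist u w + 1 = G.dist u v

theorem exists_isProj (hG : G.Connected) (huv : u ≠ v) : ∃ w, IsProj G u v w := by
  obtain ⟨p, hp⟩ := hG.exists_walk_length_eq_dist v u
  cases p with
  | nil => exact absurd rfl huv
  | @cons _ w _ hvw q =>
    refine ⟨w, hvw, ?_⟩
    have hq := SimpleGraph.dist_le q
    have htri := hG.dist_triangle (u := v) (v := w) (w := u)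
    rw [SimpleGraph.Walk.length_cons] at hp
    rw [SimpleGraph.dist_eq_one_iff_adj.2 hvw] at htri
    rw [G.dist_comm (u := u), G.dist_comm (u := u)]
    lia

theorem isAcyclic_fromEdgeSet_of_card_lt_egirth {E : Finset (Sym2 V)} (hE : ↑E ⊆ G.edgeSet)
    (hcard : (E.card : ℕ∞) < G.egirth) :
    (SimpleGraph.fromEdgeSet (E : Set (Sym2 V))).IsAcyclic := by
  classical
  intro a c hc
  have hle : SimpleGraph.fromEdgeSet (E : Set (Sym2 V)) ≤ G :=
    (SimpleGraph.fromEdgeSet_mono hE).trans_eq G.fromEdgeSet_edgeSet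
  have hgirth := SimpleGraph.egirth_le_length (hc.mapLe hle)
  have hlength : c.length ≤ E.card := by
    rw [← c.length_edges, ← List.toFinset_card_of_nodup hc.edges_nodup]
    refine Finset.card_le_card fun e he => ?_
    have := c.edges_subset_edgeSet (by simpa using he)
    rw [SimpleGraph.edgeSet_fromEdgeSet] at this
    exact this.1
  rw [SimpleGraph.Walk.length_mapLe] at hgirth
  exact hgirth.not_gt ((Nat.cast_le.2 hlength).trans_lt hcard)

/-- The union of the two paths has too few edges to contain a cycle. -/
theorem eq_of_isPath_of_length_add_length_lt_egirth {p q : G.Walk u v} (hp : p.IsPath)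
    (hq : q.IsPath) (h : ((p.length + q.length : ℕ) : ℕ∞) < G.egirth) : p = q := by
  classical
  set E : Finset (Sym2 V) := p.edges.toFinset ∪ q.edges.toFinset with hE
  have hEG : ↑E ⊆ G.edgeSet := fun e he => by
    rcases (by simpa [hE] using he : e ∈ p.edges ∨ e ∈ q.edges) with he | he
    exacts [p.edges_subset_edgeSet he, q.edges_subset_edgeSet he]
  have hcard : E.card ≤ p.length + q.length :=
    (Finset.card_union_le _ _).trans <| Nat.add_le_add
      ((List.toFinset_card_le _).trans p.length_edges.le)
      ((List.toFinset_card_le _).trans q.length_edges.le)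
  have hmem : ∀ e ∈ E, e ∈ (SimpleGraph.fromEdgeSet (E : Set (Sym2 V))).edgeSet := fun e he => by
    rw [SimpleGraph.edgeSet_fromEdgeSet]
    exact ⟨he, G.not_isDiag_of_mem_edgeSet (hEG he)⟩
  have hpE : ∀ e ∈ p.edges, e ∈ (SimpleGraph.fromEdgeSet (E : Set (Sym2 V))).edgeSet :=
    fun e he => hmem e (by simp [hE, he])
  have hqE : ∀ e ∈ q.edges, e ∈ (SimpleGraph.fromEdgeSet (E : Set (Sym2 V))).edgeSet :=
    fun e he => hmem e (by simp [hE, he])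
  have hacyclic := isAcyclic_fromEdgeSet_of_card_lt_egirth hEG ((Nat.cast_le.2 hcard).trans_lt h)
  have hpq := congrArg Subtype.val ((hacyclic.subsingleton_path u v).elim
    ⟨p.transfer _ hpE, hp.transfer hpE⟩ ⟨q.transfer _ hqE, hq.transfer hqE⟩)
  exact SimpleGraph.Walk.ext_support (by simpa using congrArg SimpleGraph.Walk.support hpq)

theorem IsProj.exists_geodesic (hG : G.Connected) (h : IsProj G u v w) :
    ∃ p : G.Walk u v, p.length = G.dist u v ∧ p.penultimate = w := by
  obtain ⟨p, hp⟩ := hG.exists_walk_length_eq_dist u w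
  exact ⟨p.concat h.1.symm, by rw [SimpleGraph.Walk.length_concat, hp, h.2],
    p.penultimate_concat h.1.symm⟩

theorem IsProj.eq_of_lt_egirth (hG : G.Connected) {w' : V}
    (hgirth : ((2 * G.dist u v : ℕ) : ℕ∞) < G.egirth) (hw : IsProj G u v w)
    (hw' : IsProj G u v w') : w = w' := by
  obtain ⟨p, hp, rfl⟩ := hw.exists_geodesic hG
  obtain ⟨q, hq, rfl⟩ := hw'.exists_geodesic hG
  rw [eq_of_isPath_of_length_add_length_lt_egirth (p.isPath_of_length_eq_dist hp)
    (q.isPath_of_length_eq_dist hq) (by rwa [hp, hq, ← two_mul])]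

end Paths

/-- The graph `G` is the incidence graph of a (possibly non-thick) generalised `n`-gon with point
set `P`; the vertices outside `P` are the lines. -/
structure IsGenPolygon {V : Type*} (G : SimpleGraph V) (P : Set V) (n : ℕ) : Prop where
  connected : G.Connected
  mem_iff_notMem : ∀ {v w}, G.Adj v w → (v ∈ P ↔ w ∉ P)
  dist_le : ∀ u v, G.dist u v ≤ n
  isProj_unique : ∀ {u v w w'}, G.dist u v < n → IsProj G u v w → IsProj G u v w' → w = w'

namespace IsGenPolygon

variable {V : Type*} {G : SimpleGraph V} {P : Set V} {n : ℕ} {u v w w' : V}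

theorem of_ediam_le_of_le_egirth [Nonempty V] (hP : ∀ {v w}, G.Adj v w → (v ∈ P ↔ w ∉ P))
    (hdiam : G.ediam ≤ n) (hgirth : ((2 * n : ℕ) : ℕ∞) ≤ G.egirth) : IsGenPolygon G P n := by
  have hconn : G.Connected := by
    by_contra h
    rw [SimpleGraph.ediam_eq_top_of_not_connected h] at hdiam
    exact ENat.natCast_ne_top n (top_le_iff.1 hdiam)
  exact {
    connected := hconn
    mem_iff_notMem := hP
    dist_le := fun u v => Nat.cast_le.1 <| by
      rw [(hconn u v).coe_dist_eq_edist]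
      exact SimpleGraph.edist_le_ediam.trans hdiam
    isProj_unique := fun huv hw hw' =>
      hw.eq_of_lt_egirth hconn (lt_of_lt_of_le (by exact_mod_cast (by lia)) hgirth) hw' }

theorem even_dist_iff (hG : IsGenPolygon G P n) : Even (G.dist u v) ↔ (u ∈ P ↔ v ∈ P) := by
  classical
  let c : G.Coloring Bool := .mk (fun v => decide (v ∈ P)) fun {v w} hvw => by
    simp [hG.mem_iff_notMem hvw]
  have hc : ∀ v, c v = true ↔ v ∈ P := fun v => decide_eq_true_iff
  obtain ⟨p, hp⟩ := hG.connected.exists_walk_length_eq_dist u v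
  rw [← hp, c.even_length_iff_congr p, hc, hc]

theorem isProj_or (hG : IsGenPolygon G P n) (hvw : G.Adj v w) :
    IsProj G u v w ∨ G.dist u w = G.dist u v + 1 := by
  have hne : G.dist u w ≠ G.dist u v := fun h => by
    have hv := hG.even_dist_iff (u := u) (v := v)
    have hw := hG.even_dist_iff (u := u) (v := w)
    have := hG.mem_iff_notMem hvw
    grind
  have hle := hG.connected.dist_triangle (u := u) (v := v) (w := w)
  have hge := hG.connected.dist_triangle (u := u) (v := w) (w := v)
  rw [SimpleGraph.dist_eq_one_iff_adj.2 hvw] at hle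
  rw [SimpleGraph.dist_eq_one_iff_adj.2 hvw.symm] at hge
  by_cases h : G.dist u w = G.dist u v + 1
  · exact .inr h
  · exact .inl ⟨hvw, by lia⟩

theorem dist_eq_of_ne (hG : IsGenPolygon G P n) (huv : G.dist u v < n) (hw : IsProj G u v w)
    (hvw' : G.Adj v w') (hne : w' ≠ w) : G.dist u w' = G.dist u v + 1 :=
  (hG.isProj_or hvw').resolve_left fun hw' => hne (hG.isProj_unique huv hw' hw)

theorem isProj_of_dist_eq (hG : IsGenPolygon G P n) (huv : G.dist u v = n) (hvw : G.Adj v w) :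
    IsProj G u v w :=
  (hG.isProj_or hvw).resolve_right fun h => by have := hG.dist_le u w; lia

theorem encard_neighborSet_le_of_dist_eq (hG : IsGenPolygon G P n) (hn : 2 ≤ n)
    (huv : G.dist u v = n) : (G.neighborSet u).encard ≤ (G.neighborSet v).encard := by
  have hvu : G.dist v u = n := G.dist_comm.trans huv
  have hproj : ∀ w ∈ G.neighborSet u, ∃ v', IsProj G w v v' := fun w hw => by
    refine exists_isProj hG.connected fun h => ?_
    have := (hG.isProj_of_dist_eq hvu hw).2
    rw [h, SimpleGraph.dist_self] at this
    lia
  choose! f hf using hproj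
  refine Set.encard_le_encard_of_injOn (f := f) (fun w hw => (hf w hw).1) ?_
  have hback : ∀ w ∈ G.neighborSet u, IsProj G (f w) u w := fun w hw => by
    have h₁ := (hG.isProj_of_dist_eq hvu hw).2
    have h₂ := (hf w hw).2
    have h₃ := (hG.isProj_of_dist_eq huv (hf w hw).1).2
    refine ⟨hw, ?_⟩
    rw [G.dist_comm (v := w), G.dist_comm (v := u)]
    rw [G.dist_comm (v := w)] at h₁
    lia
  intro w hw w' hw' hff
  refine hG.isProj_unique ?_ (hback w hw) (hff ▸ hback w' hw')
  have := (hG.isProj_of_dist_eq huv (hf w hw).1).2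
  rw [G.dist_comm]
  lia

theorem encard_neighborSet_eq_of_dist_eq (hG : IsGenPolygon G P n) (hn : 2 ≤ n)
    (huv : G.dist u v = n) : (G.neighborSet u).encard = (G.neighborSet v).encard :=
  (hG.encard_neighborSet_le_of_dist_eq hn huv).antisymm
    (hG.encard_neighborSet_le_of_dist_eq hn (G.dist_comm.trans huv))

theorem exists_dist_eq_of_adj (hG : IsGenPolygon G P n) (hdeg : ∀ v, (G.neighborSet v).Nontrivial)
    (huv : G.Adj u v) {k : ℕ} (hk : k < n) : ∃ w, G.dist u w = k + 1 ∧ G.dist v w = k := by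
  induction k with
  | zero => exact ⟨v, by simp [SimpleGraph.dist_eq_one_iff_adj.2 huv]⟩
  | succ k ih =>
    obtain ⟨w, huw, hvw⟩ := ih (by lia)
    obtain ⟨w₀, hw₀⟩ := exists_isProj hG.connected (u := u) (v := w) (by
      rintro rfl
      simp at huw)
    obtain ⟨w', hww', hne⟩ := (hdeg w).exists_ne w₀
    have huw' := hG.dist_eq_of_ne (by lia) hw₀ hww' hne
    have h₁ := hG.connected.dist_triangle (u := u) (v := v) (w := w')
    have h₂ := hG.connected.dist_triangle (u := v) (v := w) (w := w')
    rw [SimpleGraph.dist_eq_one_iff_adj.2 huv] at h₁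
    rw [SimpleGraph.dist_eq_one_iff_adj.2 hww'] at h₂
    exact ⟨w', by lia, by lia⟩

theorem encard_neighborSet_eq_of_adj (hG : IsGenPolygon G P n) (hn : 2 ≤ n)
    (hdeg : ∀ v, (G.neighborSet v).Nontrivial) (hu : 3 ≤ (G.neighborSet u).encard)
    (hv : G.Adj u v) (hw : G.Adj u w) : (G.neighborSet v).encard = (G.neighborSet w).encard := by
  obtain ⟨x, hx, hxv, hxw⟩ : ∃ x, G.Adj u x ∧ x ≠ v ∧ x ≠ w :=
    exists_mem_ne_ne_of_three_le_encard hu v w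
  obtain ⟨y, huy, hxy⟩ := hG.exists_dist_eq_of_adj hdeg hx (k := n - 2) (by lia)
  rw [G.dist_comm] at huy hxy
  have hopp : ∀ z, G.Adj u z → x ≠ z → G.dist z y = n := fun z hz hne => by
    have := hG.dist_eq_of_ne (by lia) (⟨hx, by lia⟩ : IsProj G y u x) hz hne.symm
    rw [G.dist_comm]
    lia
  rw [hG.encard_neighborSet_eq_of_dist_eq hn (hopp v hv hxv),
    hG.encard_neighborSet_eq_of_dist_eq hn (hopp w hw hxw)]

theorem encard_neighborSet_eq_of_notMem (hG : IsGenPolygon G P n) (hn : 2 ≤ n)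
    (hdeg : ∀ v, (G.neighborSet v).Nontrivial) (hP : ∀ u ∈ P, 3 ≤ (G.neighborSet u).encard)
    (hu : u ∉ P) (hv : v ∉ P) : (G.neighborSet u).encard = (G.neighborSet v).encard := by
  induction hd : G.dist u v using Nat.strong_induction_on generalizing v with
  | _ d ih =>
    by_cases huv : u = v
    · rw [huv]
    obtain ⟨p, hp⟩ := exists_isProj hG.connected huv
    have hpP : p ∈ P := (hG.mem_iff_notMem hp.1.symm).2 hv
    obtain ⟨w, hw⟩ := exists_isProj hG.connected (u := u) (v := p) fun h => hu (h ▸ hpP)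
    rw [ih (G.dist u w) (by have := hp.2; have := hw.2; lia)
      ((hG.mem_iff_notMem hw.1).1 hpP) rfl]
    exact hG.encard_neighborSet_eq_of_adj hn hdeg (hP p hpP) hw.1 hp.1.symm

theorem finite_of_finite_neighborSet (hG : IsGenPolygon G P n)
    (h : ∀ v, (G.neighborSet v).Finite) : Finite V := by
  obtain ⟨u⟩ := hG.connected.nonempty
  have hball : ∀ k, {v | G.dist u v ≤ k}.Finite := fun k => by
    induction k with
    | zero => simp [hG.connected.dist_eq_zero_iff]
    | succ k ih =>
      refine ((Set.finite_singleton u).union (ih.biUnion fun v _ => h v)).subset fun v hv => ?_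
      by_cases huv : u = v
      · exact .inl huv.symm
      · obtain ⟨w, hw⟩ := exists_isProj hG.connected huv
        have hw₂ := hw.2
        have hv : G.dist u v ≤ k + 1 := hv
        exact .inr (Set.mem_biUnion (show G.dist u w ≤ k by lia) hw.1.symm)
  exact Set.finite_univ_iff.1 ((hball n).subset fun v _ => hG.dist_le u v)

section Induce

variable {W : Set V}

theorem exists_walk_induce_length_eq (hG : IsGenPolygon G P n)
    (hproj : ∀ u ∈ W, ∀ v ∈ W, G.dist u v < n → ∀ w, IsProj G u v w → w ∈ W)
    (hnbr : ∀ v ∈ W, ∃ w ∈ W, G.Adj v w) (u v : W) :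
    ∃ p : (G.induce W).Walk u v, p.length = G.dist u v := by
  induction hd : G.dist (u : V) v generalizing v with
  | zero =>
    obtain rfl : u = v := Subtype.ext (hG.connected.dist_eq_zero_iff.1 hd)
    exact ⟨.nil, rfl⟩
  | succ k ih =>
    obtain ⟨w, hwW, hw⟩ : ∃ w ∈ W, IsProj G u v w := by
      rcases (hG.dist_le u v).lt_or_eq with hlt | heq
      · obtain ⟨w, hw⟩ := exists_isProj hG.connected (u := (u : V)) (v := v) fun h => by
          simp [h] at hd
        exact ⟨w, hproj u u.2 v v.2 hlt w hw, hw⟩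
      · obtain ⟨w, hwW, hw⟩ := hnbr v v.2
        exact ⟨w, hwW, hG.isProj_of_dist_eq heq hw⟩
    obtain ⟨p, hp⟩ := ih ⟨w, hwW⟩ (by have := hw.2; simp only; lia)
    have hadj : (G.induce W).Adj ⟨w, hwW⟩ v := hw.1.symm
    exact ⟨p.concat hadj, by rw [SimpleGraph.Walk.length_concat, hp]⟩

theorem dist_induce (hG : IsGenPolygon G P n)
    (hproj : ∀ u ∈ W, ∀ v ∈ W, G.dist u v < n → ∀ w, IsProj G u v w → w ∈ W)
    (hnbr : ∀ v ∈ W, ∃ w ∈ W, G.Adj v w) (u v : W) :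
    (G.induce W).dist u v = G.dist (u : V) v := by
  obtain ⟨p, hp⟩ := hG.exists_walk_induce_length_eq hproj hnbr u v
  refine le_antisymm (hp ▸ SimpleGraph.dist_le p) ?_
  obtain ⟨q, hq⟩ := p.reachable.exists_walk_length_eq_dist
  rw [← hq, ← q.length_map (SimpleGraph.Embedding.induce W).toHom]
  exact SimpleGraph.dist_le _

theorem induce (hG : IsGenPolygon G P n) (hW : W.Nonempty)
    (hproj : ∀ u ∈ W, ∀ v ∈ W, G.dist u v < n → ∀ w, IsProj G u v w → w ∈ W)
    (hnbr : ∀ v ∈ W, ∃ w ∈ W, G.Adj v w) :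
    IsGenPolygon (G.induce W) (Subtype.val ⁻¹' P) n where
  connected := by
    have := hW.to_subtype
    exact ⟨fun u v => (hG.exists_walk_induce_length_eq hproj hnbr u v).elim fun p _ => p.reachable⟩
  mem_iff_notMem h := hG.mem_iff_notMem h
  dist_le u v := hG.dist_induce hproj hnbr u v ▸ hG.dist_le u v
  isProj_unique h hw hw' := by
    simp only [IsProj, hG.dist_induce hproj hnbr] at h hw hw'
    exact Subtype.ext (hG.isProj_unique h hw hw')

end Induce

end IsGenPolygon

/-- `G` is biregular of order `(s, t)`: a vertex has `t + 1` neighbours if it belongs to `P` and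
`s + 1` neighbours otherwise. -/
structure IsBiregular {V : Type*} (G : SimpleGraph V) (P : Set V) (s t : ℕ) : Prop where
  encard_of_mem : ∀ v ∈ P, (G.neighborSet v).encard = t + 1
  encard_of_notMem : ∀ v ∉ P, (G.neighborSet v).encard = s + 1

namespace IsBiregular

variable {V : Type*} {G : SimpleGraph V} {P : Set V} {s t : ℕ} {v : V}

theorem finite_neighborSet (h : IsBiregular G P s t) (v : V) : (G.neighborSet v).Finite := by
  by_cases hv : v ∈ P
  · exact Set.finite_of_encard_eq_coe (k := t + 1) (by simp [h.encard_of_mem v hv])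
  · exact Set.finite_of_encard_eq_coe (k := s + 1) (by simp [h.encard_of_notMem v hv])

variable [Fintype (G.neighborSet v)]

theorem degree_of_mem (h : IsBiregular G P s t) (hv : v ∈ P) : G.degree v = t + 1 := by
  have := h.encard_of_mem v hv
  rw [← SimpleGraph.coe_neighborFinset, Set.encard_coe_eq_coe_finsetCard,
    SimpleGraph.card_neighborFinset_eq_degree] at this
  exact_mod_cast this

theorem degree_of_notMem (h : IsBiregular G P s t) (hv : v ∉ P) : G.degree v = s + 1 := by
  have := h.encard_of_notMem v hv
  rw [← SimpleGraph.coe_neighborFinset, Set.encard_coe_eq_coe_finsetCard,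
    SimpleGraph.card_neighborFinset_eq_degree] at this
  exact_mod_cast this

end IsBiregular

section IdempotentTrace

open Matrix in
theorem exists_trace_eq_of_mul_self_eq_smul {n : Type*} [Fintype n] {Y : Matrix n n ℝ} {c : ℝ}
    (hc : c ≠ 0) (hY : Y * Y = c • Y) : ∃ m : ℕ, Y.trace = c * m := by
  classical
  have hid : IsIdempotentElem (toLin' (c⁻¹ • Y)) := by
    rw [IsIdempotentElem, Module.End.mul_eq_comp, ← toLin'_mul, smul_mul_smul_comm, hY, smul_smul,
      inv_mul_cancel_right₀ hc]
  have htr := (LinearMap.IsIdempotentElem.isProj_range _ hid).trace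
  rw [trace_toLin'_eq, trace_smul, smul_eq_mul, inv_mul_eq_iff_eq_mul₀ hc] at htr
  exact ⟨_, htr⟩

theorem isSquare_of_sqrt_mul_eq_intCast {n : ℕ} {a b : ℤ} (hb : b ≠ 0) (h : √n * b = a) :
    IsSquare n := by
  by_contra hn
  refine irrational_sqrt_natCast_iff.2 hn ⟨a / b, ?_⟩
  push_cast
  rw [div_eq_iff (by exact_mod_cast hb), h]

end IdempotentTrace

section DistMatrix

variable {V : Type*} {G : SimpleGraph V} {P : Set V} {n : ℕ}

/-- The matrix with entry `f (d(u, v))` at `(u, v)`: a linear combination of the distance matrices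
of `G`. -/
noncomputable def distMatrix (G : SimpleGraph V) (f : ℕ → ℝ) : Matrix V V ℝ :=
  .of fun u v => f (G.dist u v)

/-- The sum of `f (d(u, w))` over the neighbours `w` of a vertex of degree `e` at distance `d` from
`u` in a generalised `n`-gon, as a function of `d`. -/
noncomputable def distStep (n : ℕ) (e : ℝ) (f : ℕ → ℝ) (d : ℕ) : ℝ :=
  if d = 0 then e * f 1 else if d = n then e * f (n - 1) else f (d - 1) + (e - 1) * f (d + 1)

theorem IsGenPolygon.sum_neighborFinset_dist (hG : IsGenPolygon G P n) (f : ℕ → ℝ) (u v : V)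
    [Fintype (G.neighborSet v)] :
    ∑ w ∈ G.neighborFinset v, f (G.dist u w) = distStep n (G.degree v) f (G.dist u v) := by
  classical
  have hconst : ∀ k, (∀ w, G.Adj v w → G.dist u w = k) →
      ∑ w ∈ G.neighborFinset v, f (G.dist u w) = G.degree v * f k := fun k hk => by
    rw [Finset.sum_congr rfl fun w hw => by rw [hk w ((G.mem_neighborFinset v w).1 hw)],
      Finset.sum_const, G.card_neighborFinset_eq_degree, nsmul_eq_mul]
  unfold distStep
  split_ifs with h₀ hn
  · obtain rfl := hG.connected.dist_eq_zero_iff.1 h₀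
    exact hconst 1 fun w hw => SimpleGraph.dist_eq_one_iff_adj.2 hw
  · exact hconst _ fun w hw => by have := (hG.isProj_of_dist_eq hn hw).2; lia
  · have hlt := (hG.dist_le u v).lt_of_ne hn
    obtain ⟨w, hw⟩ := exists_isProj hG.connected (u := u) (v := v) fun h => h₀ (by simp [h])
    rw [← Finset.add_sum_erase _ _ ((G.mem_neighborFinset v w).2 hw.1), ← hw.2,
      Nat.add_sub_cancel, hw.2, Finset.sum_congr rfl fun w' hw' => by
        rw [hG.dist_eq_of_ne hlt hw ((G.mem_neighborFinset v w').1 (Finset.mem_of_mem_erase hw'))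
          (Finset.ne_of_mem_erase hw')], Finset.sum_const,
      Finset.card_erase_of_mem ((G.mem_neighborFinset v w).2 hw.1),
      G.card_neighborFinset_eq_degree, nsmul_eq_mul,
      Nat.cast_pred (G.degree_pos_iff_exists_adj v |>.2 ⟨w, hw.1⟩)]

/-- The function with values `a`, `b`, `c` at `1`, `3`, `5` and `0` elsewhere. -/
def oddFun (a b c : ℝ) : ℕ → ℝ
  | 1 => a
  | 3 => b
  | 5 => c
  | _ => 0

theorem adjMatrix_eq_distMatrix_oddFun [DecidableRel G.Adj] :
    G.adjMatrix ℝ = distMatrix G (oddFun 1 0 0) := by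
  ext u v
  simp only [SimpleGraph.adjMatrix_apply, ← SimpleGraph.dist_eq_one_iff_adj, distMatrix,
    Matrix.of_apply]
  split_ifs with h
  · rw [h, oddFun]
  · unfold oddFun
    split <;> first | rfl | contradiction

theorem smul_distMatrix_oddFun (k a b c : ℝ) :
    k • distMatrix G (oddFun a b c) = distMatrix G (oddFun (k * a) (k * b) (k * c)) := by
  ext u v
  simp only [distMatrix, Matrix.smul_apply, Matrix.of_apply, smul_eq_mul]
  unfold oddFun
  split <;> simp

theorem distStep_distStep_oddFun {s t e : ℝ} (he : e * (s + t + 2 - e) = (s + 1) * (t + 1))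
    (a b c : ℝ) {d : ℕ} (hd : d ≤ 6) :
    distStep 6 e (distStep 6 (s + t + 2 - e) (oddFun a b c)) d =
      oddFun ((s + t + 1) * a + s * t * b) (a + (s + t) * b + s * t * c)
        (b + (s + t + s * t) * c) d := by
  interval_cases d <;> simp [distStep, oddFun]
  · linear_combination b * he
  · linear_combination c * he
  · linear_combination c * he

end DistMatrix

namespace IsBiregular

variable {V : Type*} {G : SimpleGraph V} {P : Set V} {n s t : ℕ} {v w : V}
  [Fintype (G.neighborSet v)]

theorem degree_mul (h : IsBiregular G P s t) :
    (G.degree v : ℝ) * (s + t + 2 - G.degree v) = (s + 1) * (t + 1) := by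
  by_cases hv : v ∈ P
  · rw [h.degree_of_mem hv]
    push_cast
    ring
  · rw [h.degree_of_notMem hv]
    push_cast
    ring

theorem degree_add_degree_of_adj [Fintype (G.neighborSet w)] (h : IsBiregular G P s t)
    (hG : IsGenPolygon G P n) (hvw : G.Adj v w) : (G.degree w : ℝ) = s + t + 2 - G.degree v := by
  by_cases hv : v ∈ P
  · rw [h.degree_of_mem hv, h.degree_of_notMem ((hG.mem_iff_notMem hvw).1 hv)]
    push_cast
    ring
  · rw [h.degree_of_notMem hv, h.degree_of_mem ((hG.mem_iff_notMem hvw.symm).2 hv)]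
    push_cast
    ring

end IsBiregular

namespace IsGenPolygon

section Fintype

variable {V : Type*} [Fintype V] {G : SimpleGraph V} [DecidableRel G.Adj] {P : Set V} {n s t : ℕ}

theorem distMatrix_mul_adjMatrix_apply (hG : IsGenPolygon G P n) (f : ℕ → ℝ) (u v : V) :
    (distMatrix G f * G.adjMatrix ℝ) u v = distStep n (G.degree v) f (G.dist u v) := by
  rw [SimpleGraph.mul_adjMatrix_apply]
  exact hG.sum_neighborFinset_dist f u v

theorem trace_distMatrix_oddFun_mul_adjMatrix (hG : IsGenPolygon G P n) (a b c : ℝ) :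
    (distMatrix G (oddFun a b c) * G.adjMatrix ℝ).trace = a * (∑ v, G.degree v : ℕ) := by
  simp only [Matrix.trace, Matrix.diag_apply, hG.distMatrix_mul_adjMatrix_apply,
    SimpleGraph.dist_self, distStep, if_true, oddFun]
  rw [← Finset.sum_mul, mul_comm, Nat.cast_sum]

theorem distMatrix_oddFun_mul [DecidableEq V] (hG : IsGenPolygon G P 6)
    (h : IsBiregular G P s t) (a b c k : ℝ) :
    distMatrix G (oddFun a b c) * (G.adjMatrix ℝ ^ 2 + k • 1) =
      distMatrix G (oddFun ((s + t + 1 + k) * a + s * t * b) (a + (s + t + k) * b + s * t * c)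
        (b + (s + t + s * t + k) * c)) := by
  ext u v
  have hstep : (distMatrix G (oddFun a b c) * G.adjMatrix ℝ ^ 2) u v =
      distStep 6 (G.degree v) (distStep 6 (s + t + 2 - G.degree v) (oddFun a b c))
        (G.dist u v) := by
    rw [pow_two, ← mul_assoc, SimpleGraph.mul_adjMatrix_apply, ← hG.sum_neighborFinset_dist]
    refine Finset.sum_congr rfl fun w hw => ?_
    rw [hG.distMatrix_mul_adjMatrix_apply,
      h.degree_add_degree_of_adj hG ((G.mem_neighborFinset v w).1 hw)]
  rw [mul_add, mul_smul_one, Matrix.add_apply, hstep,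
    distStep_distStep_oddFun h.degree_mul a b c (hG.dist_le u v)]
  simp only [distMatrix, Matrix.smul_apply, Matrix.of_apply, smul_eq_mul]
  unfold oddFun
  split <;> ring

theorem adjMatrix_mul_mul [DecidableEq V] (hG : IsGenPolygon G P 6)
    (h : IsBiregular G P s t) (k k' : ℝ) :
    G.adjMatrix ℝ * (G.adjMatrix ℝ ^ 2 + k • 1) * (G.adjMatrix ℝ ^ 2 + k' • 1) =
      distMatrix G (oddFun ((s + t + 1 + k') * (s + t + 1 + k) + s * t)
        (2 * (s + t) + 1 + k + k') 1) := by
  nth_rewrite 1 [adjMatrix_eq_distMatrix_oddFun]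
  rw [hG.distMatrix_oddFun_mul h, hG.distMatrix_oddFun_mul h]
  congr 2 <;> ring

/-- The number `m` is the multiplicity of the eigenvalue `s + t + r` of the square of the adjacency
matrix; the formula comes from the trace of a multiple of the projection on its eigenspace. -/
theorem exists_sum_degree_eq (hG : IsGenPolygon G P 6) (h : IsBiregular G P s t) {r : ℝ}
    (hr : 0 < r) (hrr : r * r = s * t) :
    ∃ m : ℕ, s * t * (∑ v, G.degree v : ℕ) = 2 * m * ((s + t + r) * (1 + s * t - r)) := by
  classical
  set A := G.adjMatrix ℝ with hA
  set E := distMatrix G (oddFun (-(s * t) * r) (r - s * t) 1)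
  have hE : A * (A ^ 2 + (-((s + 1) * (t + 1)) : ℝ) • 1) * (A ^ 2 + (r - (s + t)) • 1) = E := by
    rw [hA, hG.adjMatrix_mul_mul h]
    congr 2 <;> ring
  have hEA (k : ℝ) : E * (A ^ 2 + k • 1) = (s + t + r + k) • E := by
    rw [hG.distMatrix_oddFun_mul h, smul_distMatrix_oddFun]
    congr 2
    · linear_combination (s * t : ℝ) * hrr
    · linear_combination -hrr
    · ring
  have hYY : (A * E) * (A * E) =
      ((s + t + r) * (r - (1 + s * t)) * (2 * r)) • (A * E) := by
    have hEA₀ : E * A ^ 2 = (s + t + r) • E := by simpa using hEA 0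
    calc (A * E) * (A * E)
        = A * (E * A ^ 2 * (A ^ 2 + (-((s + 1) * (t + 1)) : ℝ) • 1) *
            (A ^ 2 + (r - (s + t)) • 1)) := by
          nth_rewrite 2 [← hE]
          simp only [pow_two, mul_assoc]
      _ = _ := by
          rw [hEA₀, smul_mul_assoc, hEA, smul_smul, smul_mul_assoc, hEA, smul_smul, mul_smul_comm]
          congr 1
          ring
  have htrace : (A * E).trace = -(s * t) * r * (∑ v, G.degree v : ℕ) := by
    rw [Matrix.trace_mul_comm, hG.trace_distMatrix_oddFun_mul_adjMatrix]
  have hlt : r < 1 + s * t := by nlinarith [sq_nonneg (r - 1)]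
  have hne : (s + t + r) * (r - (1 + s * t)) * (2 * r) ≠ 0 := by
    have : (0 : ℝ) < s + t + r := by positivity
    exact mul_ne_zero (mul_ne_zero this.ne' (sub_neg.2 hlt).ne) (by positivity)
  obtain ⟨m, hm⟩ := exists_trace_eq_of_mul_self_eq_smul hne hYY
  refine ⟨m, mul_right_cancel₀ hr.ne' ?_⟩
  linear_combination -(htrace.symm.trans hm)

theorem adjMatrix_sq_add_smul_mulVec_one [DecidableEq V] (hG : IsGenPolygon G P n)
    (h : IsBiregular G P s t) (k : ℝ) :
    (G.adjMatrix ℝ ^ 2 + k • 1).mulVec 1 = ((s + 1) * (t + 1) + k : ℝ) • 1 := by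
  have hsq : (G.adjMatrix ℝ ^ 2).mulVec 1 = ((s + 1) * (t + 1) : ℝ) • 1 := by
    ext u
    rw [pow_two, ← Matrix.mulVec_mulVec, SimpleGraph.adjMatrix_mulVec_apply,
      Finset.sum_congr rfl fun v hv => by
        rw [SimpleGraph.adjMatrix_mulVec_apply, Finset.sum_congr rfl fun w _ => Pi.one_apply w,
          Finset.sum_const, nsmul_one, G.card_neighborFinset_eq_degree,
          h.degree_add_degree_of_adj hG ((G.mem_neighborFinset u v).1 hv)],
      Finset.sum_const, nsmul_eq_mul, G.card_neighborFinset_eq_degree, h.degree_mul]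
    simp
  rw [Matrix.add_mulVec, hsq, Matrix.smul_mulVec, Matrix.one_mulVec, add_smul]

theorem distMatrix_oddFun_mulVec_one (hG : IsGenPolygon G P 6) (h : IsBiregular G P s t) (u : V) :
    (distMatrix G (oddFun 1 1 1)).mulVec 1 u = G.degree u * (1 + s * t + (s * t) ^ 2) := by
  classical
  set A := G.adjMatrix ℝ with hA
  have hsum : distMatrix G (oddFun 1 1 1) =
      A * (A ^ 2 + (-(s + t) : ℝ) • 1) * (A ^ 2 + (-(s + t) : ℝ) • 1) - (s * t : ℝ) • A := by
    rw [eq_sub_iff_add_eq, hA, hG.adjMatrix_mul_mul h, adjMatrix_eq_distMatrix_oddFun,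
      smul_distMatrix_oddFun]
    ext u v
    simp only [distMatrix, Matrix.add_apply, Matrix.of_apply]
    unfold oddFun
    split <;> ring
  rw [hsum, Matrix.sub_mulVec, ← Matrix.mulVec_mulVec, ← Matrix.mulVec_mulVec]
  simp only [hA, hG.adjMatrix_sq_add_smul_mulVec_one h, Matrix.mulVec_smul, Matrix.smul_mulVec,
    Pi.sub_apply, Pi.smul_apply, SimpleGraph.adjMatrix_mulVec_apply, Pi.one_apply,
    Finset.sum_const, nsmul_one, G.card_neighborFinset_eq_degree, smul_eq_mul]
  ring

theorem card_odd_dist (hG : IsGenPolygon G P 6) (h : IsBiregular G P s t) (u : V) :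
    Finset.card {v | Odd (G.dist u v)} = G.degree u * (1 + s * t + (s * t) ^ 2) := by
  have hrow := hG.distMatrix_oddFun_mulVec_one h u
  have hind (v : V) :
      distMatrix G (oddFun 1 1 1) u v = if Odd (G.dist u v) then 1 else 0 := by
    have hd := hG.dist_le u v
    rw [distMatrix, Matrix.of_apply]
    interval_cases G.dist u v <;> simp +decide [oddFun]
  simp only [Matrix.mulVec, dotProduct, hind, Pi.one_apply, mul_one, Finset.sum_boole] at hrow
  exact_mod_cast hrow

end Fintype

/-- **Feit–Higman theorem** for generalised hexagons. -/
theorem isSquare_mul_of_isBiregular {V : Type*} [Finite V] {G : SimpleGraph V} {P : Set V}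
    {s t : ℕ} (hG : IsGenPolygon G P 6) (h : IsBiregular G P s t) (hs : 1 < s) (ht : 1 < t) :
    IsSquare (s * t) := by
  classical
  have := Fintype.ofFinite V
  set r : ℝ := √(s * t : ℕ) with hr
  have hrr : r * r = s * t := by rw [hr, Real.mul_self_sqrt (Nat.cast_nonneg _), Nat.cast_mul]
  obtain ⟨m, hm⟩ := hG.exists_sum_degree_eq (r := r) h (Real.sqrt_pos.2 (by positivity)) hrr
  have hm₀ : m ≠ 0 := by
    rintro rfl
    obtain ⟨v⟩ := hG.connected.nonempty
    have hv : 0 < ∑ v, G.degree v := by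
      refine Finset.sum_pos (fun v _ => ?_) ⟨v, Finset.mem_univ v⟩
      by_cases hv : v ∈ P
      · simp [h.degree_of_mem hv]
      · simp [h.degree_of_notMem hv]
    have : (0 : ℝ) < s * t * (∑ v, G.degree v : ℕ) := by positivity
    rw [hm] at this
    simp at this
  refine isSquare_of_sqrt_mul_eq_intCast (a := s * t * (∑ v, G.degree v : ℕ) -
    2 * m * ((s + t) * (1 + s * t) - s * t)) (b := 2 * m * ((s - 1) * (t - 1))) ?_ ?_
  · have : (s : ℤ) - 1 ≠ 0 := by lia
    have : (t : ℤ) - 1 ≠ 0 := by lia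
    positivity
  · rw [← hr]
    push_cast at hm ⊢
    linear_combination 2 * m * hrr - hm

end IsGenPolygon

/-- A blocking set `S` of `s + 1` pairwise non-collinear points of a generalised hexagon of order
`(s, t)`, two of which are special: points at distance at most `4` in the incidence graph are the
points that are not opposite. -/
structure SpecialBlockingSet {V : Type*} (G : SimpleGraph V) (P S : Set V) (s t : ℕ) : Prop where
  polygon : IsGenPolygon G P 6
  biregular : IsBiregular G P s t
  one_lt : 1 < t
  subset : S ⊆ P
  encard_eq : S.encard = s + 1
  exists_dist_le : ∀ p ∈ P, ∃ x ∈ S, G.dist x p ≤ 4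
  dist_ne_two : ∀ x ∈ S, ∀ y ∈ S, G.dist x y ≠ 2
  exists_dist_eq : ∃ x ∈ S, ∃ y ∈ S, G.dist x y = 4

namespace SpecialBlockingSet

variable {V : Type*} {G : SimpleGraph V} {P S : Set V} {s t : ℕ} {u v x y p q K L M : V}

theorem even_dist (h : SpecialBlockingSet G P S s t) (hx : x ∈ S) (hp : p ∈ P) :
    Even (G.dist x p) :=
  h.polygon.even_dist_iff.2 (iff_of_true (h.subset hx) hp)

theorem odd_dist (h : SpecialBlockingSet G P S s t) (hx : x ∈ S) (hK : K ∉ P) :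
    Odd (G.dist x K) :=
  Nat.not_even_iff_odd.1 fun hev => hK ((h.polygon.even_dist_iff.1 hev).1 (h.subset hx))

theorem dist_le_five (h : SpecialBlockingSet G P S s t) (hx : x ∈ S) (hK : K ∉ P) :
    G.dist x K ≤ 5 := by
  have := h.polygon.dist_le x K
  have := h.odd_dist hx hK
  grind

theorem four_le_dist (h : SpecialBlockingSet G P S s t) (hx : x ∈ S) (hy : y ∈ S) (hxy : x ≠ y) :
    4 ≤ G.dist x y := by
  have := h.polygon.connected.dist_eq_zero_iff.not.2 hxy
  have := h.dist_ne_two x hx y hy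
  have := h.even_dist hx (h.subset hy)
  grind

theorem eq_of_isProj (h : SpecialBlockingSet G P S s t) (hK : K ∉ P)
    (hsurj : ∀ q, G.Adj K q → ∃ u ∈ S, IsProj G u K q) (hx : x ∈ S) (hy : y ∈ S)
    (hxp : IsProj G x K p) (hyp : IsProj G y K p) : x = y := by
  have hex : ∀ u ∈ S, ∃ q, IsProj G u K q := fun u hu =>
    exists_isProj h.polygon.connected fun huK => hK (huK ▸ h.subset hu)
  choose! f hf using hex
  have hfq : ∀ u ∈ S, ∀ q, IsProj G u K q → f u = q := fun u hu q hq =>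
    h.polygon.isProj_unique ((h.dist_le_five hu hK).trans_lt (by norm_num)) (hf u hu) hq
  have himage : f '' S = G.neighborSet K := by
    refine Set.Subset.antisymm (Set.image_subset_iff.2 fun u hu => (hf u hu).1) fun q hq => ?_
    obtain ⟨u, hu, huq⟩ := hsurj q hq
    exact ⟨u, hu, hfq u hu q huq⟩
  have hfin : S.Finite := Set.finite_of_encard_eq_coe (k := s + 1) (by simp [h.encard_eq])
  refine hfin.injOn_of_encard_image_eq ?_ hx hy ((hfq x hx p hxp).trans (hfq y hy p hyp).symm)
  rw [himage, h.biregular.encard_of_notMem K hK, h.encard_eq]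

theorem exists_dist_le_three (h : SpecialBlockingSet G P S s t) (hp : p ∈ P) (hx : x ∈ S)
    (hy : y ∈ S) (hxy : x ≠ y) (hxp : G.dist x p ≤ 4) (hyp : G.dist y p ≤ 4) (hK : G.Adj p K) :
    ∃ u ∈ S, G.dist u K ≤ 3 := by
  by_contra! hfar
  have hKP : K ∉ P := (h.polygon.mem_iff_notMem hK).1 hp
  have hproj : ∀ u ∈ S, ∀ q, G.Adj K q → G.dist u q ≤ 4 → IsProj G u K q := fun u hu q hq hle =>
    (h.polygon.isProj_or hq).resolve_right fun hd => by have := hfar u hu; lia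
  refine hxy (h.eq_of_isProj hKP (fun q hq => ?_) hx hy (hproj x hx p hK.symm hxp)
    (hproj y hy p hK.symm hyp))
  obtain ⟨u, hu, huq⟩ := h.exists_dist_le q ((h.polygon.mem_iff_notMem hq.symm).2 hKP)
  exact ⟨u, hu, hproj u hu q hq huq⟩

theorem exists_isProj_isProj (h : SpecialBlockingSet G P S s t) (hM : M ∉ P) (hx : x ∈ S)
    (hy : y ∈ S) (hxy : x ≠ y) (hxM : G.dist x M = 3) (hyM : G.dist y M = 3) (hpM : G.Adj M p)
    (hpS : ∀ u ∈ S, u ≠ p) (hfoot : ∀ u ∈ S, G.dist u p ≠ 2) (hK : G.Adj p K) (hKM : K ≠ M) :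
    ∃ u ∈ S, IsProj G u p K ∧ IsProj G u M p := by
  have hp : p ∈ P := (h.polygon.mem_iff_notMem hpM.symm).2 hM
  have hle : ∀ u, G.dist u M = 3 → G.dist u p ≤ 4 := fun u hu => by
    rcases h.polygon.isProj_or (u := u) hpM with hup | hup
    · have := hup.2; lia
    · lia
  obtain ⟨u, hu, huK⟩ := h.exists_dist_le_three hp hx hy hxy (hle x hxM) (hle y hyM) hK
  have := h.odd_dist hu ((h.polygon.mem_iff_notMem hK).1 hp)
  have := h.even_dist hu hp
  have hpK : IsProj G u p K := (h.polygon.isProj_or hK).resolve_right fun hd => by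
    have := h.polygon.connected.dist_eq_zero_iff.not.2 (hpS u hu)
    have := hfoot u hu
    grind
  have hup : G.dist u p = 4 := by
    have := hfoot u hu
    have := hpK.2
    grind
  have huM := h.polygon.dist_eq_of_ne (by lia) hpK hpM.symm hKM.symm
  exact ⟨u, hu, hpK, hpM, huM.symm⟩

theorem exists_adj_ne_ne (h : SpecialBlockingSet G P S s t) (hp : p ∈ P) (K L : V) :
    ∃ M, G.Adj p M ∧ M ≠ K ∧ M ≠ L := by
  refine exists_mem_ne_ne_of_three_le_encard (A := G.neighborSet p) ?_ K L
  rw [h.biregular.encard_of_mem p hp]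
  exact_mod_cast Nat.succ_le_succ h.one_lt

theorem isProj_of_dist_eq_two (h : SpecialBlockingSet G P S s t) (hne : ∀ u ∈ S, ¬ G.Adj u M)
    (hx : x ∈ S) (hp : G.Adj M p) (hxp : G.dist x p = 2) : IsProj G x M p := by
  refine (h.polygon.isProj_or (u := x) hp).resolve_right fun hd => hne x hx ?_
  exact SimpleGraph.dist_eq_one_iff_adj.1 (by lia)

theorem exists_isProj_of_dist_eq_three (h : SpecialBlockingSet G P S s t) (hM : M ∉ P)
    (hne : ∀ u ∈ S, ¬ G.Adj u M) (hx : x ∈ S) (hy : y ∈ S) (hxy : x ≠ y) (hxM : G.dist x M = 3)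
    (hyM : G.dist y M = 3) (hp : G.Adj M p) : ∃ u ∈ S, IsProj G u M p := by
  by_cases hfoot : ∃ u ∈ S, G.dist u p = 2
  · obtain ⟨u, hu, hup⟩ := hfoot
    exact ⟨u, hu, h.isProj_of_dist_eq_two hne hu hp hup⟩
  · push Not at hfoot
    have hpS : ∀ u ∈ S, u ≠ p := fun u hu hup => hne u hu (hup ▸ hp.symm)
    obtain ⟨K, hK, hKM, -⟩ := h.exists_adj_ne_ne ((h.polygon.mem_iff_notMem hp.symm).2 hM) M M
    obtain ⟨u, hu, -, huM⟩ := h.exists_isProj_isProj hM hx hy hxy hxM hyM hp hpS hfoot hK hKM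
    exact ⟨u, hu, huM⟩

theorem exists_dist_eq_two (h : SpecialBlockingSet G P S s t) (hM : M ∉ P)
    (hne : ∀ u ∈ S, ¬ G.Adj u M) (hx : x ∈ S) (hy : y ∈ S) (hxy : x ≠ y) (hxM : G.dist x M = 3)
    (hyM : G.dist y M = 3) (hp : G.Adj M p) : ∃ u ∈ S, G.dist u p = 2 := by
  by_contra! hfoot
  have hpS : ∀ u ∈ S, u ≠ p := fun u hu hup => hne u hu (hup ▸ hp.symm)
  have hpP : p ∈ P := (h.polygon.mem_iff_notMem hp.symm).2 hM
  obtain ⟨K, hK, hKM, -⟩ := h.exists_adj_ne_ne hpP M M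
  obtain ⟨L, hL, hLM, hLK⟩ := h.exists_adj_ne_ne hpP M K
  obtain ⟨u, hu, hupK, huM⟩ := h.exists_isProj_isProj hM hx hy hxy hxM hyM hp hpS hfoot hK hKM
  obtain ⟨v, hv, hvpL, hvM⟩ := h.exists_isProj_isProj hM hx hy hxy hxM hyM hp hpS hfoot hL hLM
  obtain rfl : u = v := h.eq_of_isProj hM (fun q hq =>
    h.exists_isProj_of_dist_eq_three hM hne hx hy hxy hxM hyM hq) hu hv huM hvM
  have hdist : G.dist u p < 6 := by
    have := h.dist_le_five hu hM
    have := huM.2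
    lia
  exact hLK (h.polygon.isProj_unique hdist hvpL hupK)

theorem dist_eq_three (h : SpecialBlockingSet G P S s t) (hM : M ∉ P)
    (hne : ∀ u ∈ S, ¬ G.Adj u M) (hx : x ∈ S) (hy : y ∈ S) (hxy : x ≠ y) (hxM : G.dist x M = 3)
    (hyM : G.dist y M = 3) (hu : u ∈ S) : G.dist u M = 3 := by
  obtain ⟨p, hp⟩ := exists_isProj h.polygon.connected fun huM : u = M => hM (huM ▸ h.subset hu)
  obtain ⟨v, hv, hvp⟩ := h.exists_dist_eq_two hM hne hx hy hxy hxM hyM hp.1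
  have hvM := h.isProj_of_dist_eq_two hne hv hp.1 hvp
  obtain rfl := h.eq_of_isProj hM (fun q hq =>
    h.exists_isProj_of_dist_eq_three hM hne hx hy hxy hxM hyM hq) hu hv hp hvM
  rw [← hvM.2, hvp]

/-- Otherwise every member of `S` is at distance `3` from `M` and no two of them have the same
projection on `M`, so that two of them are joined by a path of length `6` through `M` which is
a geodesic, although there is a special pair in `S`. -/
theorem eq_of_dist_eq_three (h : SpecialBlockingSet G P S s t) (hM : M ∉ P)
    (hne : ∀ u ∈ S, ¬ G.Adj u M) (hx : x ∈ S) (hy : y ∈ S) (hxM : G.dist x M = 3)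
    (hyM : G.dist y M = 3) : x = y := by
  by_contra hxy
  obtain ⟨a, ha, b, hb, hab⟩ := h.exists_dist_eq
  have haM := h.dist_eq_three hM hne hx hy hxy hxM hyM ha
  have hbM := h.dist_eq_three hM hne hx hy hxy hxM hyM hb
  obtain ⟨q, hq⟩ := exists_isProj h.polygon.connected fun hbM' : b = M => hM (hbM' ▸ h.subset hb)
  have haq : G.dist a q = 4 := by
    have hnot : ¬ IsProj G a M q := fun haq => by
      have := h.eq_of_isProj hM (fun q hq =>
        h.exists_isProj_of_dist_eq_three hM hne hx hy hxy hxM hyM hq) ha hb haq hq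
      simp [this] at hab
    rw [(h.polygon.isProj_or hq.1).resolve_left hnot, haM]
  obtain ⟨L, hL⟩ := exists_isProj h.polygon.connected (u := b) (v := q) fun hbq =>
    hne b hb (hbq ▸ hq.1.symm)
  have hLb : G.dist b L = 1 := by have := hL.2; have := hq.2; lia
  have hbL : G.Adj L b := (SimpleGraph.dist_eq_one_iff_adj.1 hLb).symm
  have haL : G.dist a L = 5 := by
    rw [h.polygon.dist_eq_of_ne (by lia) (⟨hq.1.symm, by lia⟩ : IsProj G a q M) hL.1, haq]
    rintro rfl
    exact hne b hb hbL.symm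
  obtain rfl : b = q := h.polygon.isProj_unique (by lia) (⟨hbL, by lia⟩ : IsProj G a L b)
    ⟨hL.1.symm, by lia⟩
  exact hne b hb hq.1.symm

end SpecialBlockingSet

/-- The points of `S`, the points collinear with two members of `S`, and the lines that meet `S`. -/
def subgeometry {V : Type*} (G : SimpleGraph V) (S : Set V) : Set V :=
  {v | (∃ x ∈ S, G.dist x v ≤ 1) ∨ ∃ x ∈ S, ∃ y ∈ S, x ≠ y ∧ G.dist x v = 2 ∧ G.dist y v = 2}

theorem mem_subgeometry_of_mem {V : Type*} {G : SimpleGraph V} {S : Set V} {x : V} (hx : x ∈ S) :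
    x ∈ subgeometry G S :=
  Or.inl ⟨x, hx, by simp⟩

namespace SpecialBlockingSet

variable {V : Type*} {G : SimpleGraph V} {P S : Set V} {s t : ℕ} {u v w x y z p K L M : V}

theorem mem_subgeometry_iff_of_notMem (h : SpecialBlockingSet G P S s t) (hK : K ∉ P) :
    K ∈ subgeometry G S ↔ ∃ x ∈ S, G.Adj x K := by
  have hne : ∀ x ∈ S, G.dist x K ≠ 2 ∧ G.dist x K ≠ 0 := fun x hx => by
    have := h.odd_dist hx hK
    grind
  constructor
  · rintro (⟨x, hx, hxK⟩ | ⟨x, hx, -, -, -, hxK, -⟩)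
    · exact ⟨x, hx, SimpleGraph.dist_eq_one_iff_adj.1 (by have := (hne x hx).2; lia)⟩
    · exact absurd hxK (hne x hx).1
  · rintro ⟨x, hx, hxK⟩
    exact Or.inl ⟨x, hx, (SimpleGraph.dist_eq_one_iff_adj.2 hxK).le⟩

theorem mem_subgeometry_of_adj (h : SpecialBlockingSet G P S s t) (hp : p ∈ subgeometry G S)
    (hpP : p ∈ P) (hpK : G.Adj p K) : K ∈ subgeometry G S := by
  have hK : K ∉ P := (h.polygon.mem_iff_notMem hpK).1 hpP
  rw [h.mem_subgeometry_iff_of_notMem hK]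
  rcases hp with ⟨x, hx, hxp⟩ | ⟨x, hx, y, hy, hxy, hxp, hyp⟩
  · have heven := h.even_dist hx hpP
    obtain rfl : x = p := h.polygon.connected.dist_eq_zero_iff.1 (by grind)
    exact ⟨x, hx, hpK⟩
  · by_contra! hne
    have hfar : ∀ u ∈ S, G.dist u p = 2 → G.dist u K = 3 := fun u hu hup => by
      rw [(h.polygon.isProj_or hpK).resolve_left fun hK' => hne u hu <|
        SimpleGraph.dist_eq_one_iff_adj.1 (by have := hK'.2; lia), hup]
    exact hxy (h.eq_of_dist_eq_three hK hne hx hy (hfar x hx hxp) (hfar y hy hyp))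

theorem mem_subgeometry_of_adj_of_adj (h : SpecialBlockingSet G P S s t) (hp : p ∈ P)
    (hK : K ∈ subgeometry G S) (hL : L ∈ subgeometry G S) (hKL : K ≠ L) (hpK : G.Adj p K)
    (hpL : G.Adj p L) : p ∈ subgeometry G S := by
  by_cases hpS : p ∈ S
  · exact mem_subgeometry_of_mem hpS
  have hproj : ∀ x ∈ S, ∀ M, G.Adj x M → G.Adj p M → G.dist x p = 2 ∧ IsProj G x p M := by
    intro x hx M hxM hpM
    have hxM' := SimpleGraph.dist_eq_one_iff_adj.2 hxM
    have hxp : G.dist x p = 2 := by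
      rcases h.polygon.isProj_or (u := x) hpM.symm with hp' | hd
      · have hp0 := hp'.2
        rw [hxM', Nat.add_eq_right, h.polygon.connected.dist_eq_zero_iff] at hp0
        exact absurd (hp0 ▸ hx) hpS
      · rw [hd, hxM']
    exact ⟨hxp, hpM, by lia⟩
  obtain ⟨x, hx, hxK⟩ :=
    (h.mem_subgeometry_iff_of_notMem ((h.polygon.mem_iff_notMem hpK).1 hp)).1 hK
  obtain ⟨y, hy, hyL⟩ :=
    (h.mem_subgeometry_iff_of_notMem ((h.polygon.mem_iff_notMem hpL).1 hp)).1 hL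
  obtain ⟨hxp, hxpK⟩ := hproj x hx K hxK hpK
  obtain ⟨hyp, hypL⟩ := hproj y hy L hyL hpL
  refine Or.inr ⟨x, hx, y, hy, ?_, hxp, hyp⟩
  rintro rfl
  exact hKL (h.polygon.isProj_unique (by lia) hxpK hypL)

theorem mem_subgeometry_of_dist_le_two (h : SpecialBlockingSet G P S s t) (hK : K ∉ P)
    (hL : L ∉ P) (hM : M ∉ P) (hKW : K ∈ subgeometry G S) (hLW : L ∈ subgeometry G S)
    (hKL : 2 < G.dist K L) (hKM : G.dist K M ≤ 2) (hLM : G.dist L M ≤ 2) :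
    M ∈ subgeometry G S := by
  rw [h.mem_subgeometry_iff_of_notMem hM]
  by_contra! hne
  have hthree : ∀ x ∈ S, ∀ N, G.Adj x N → G.dist N M ≤ 2 → G.dist x M = 3 := by
    intro x hx N hxN hNM
    have := h.polygon.connected.dist_triangle (u := x) (v := N) (w := M)
    have := SimpleGraph.dist_eq_one_iff_adj.2 hxN
    have := SimpleGraph.dist_eq_one_iff_adj.not.2 (hne x hx)
    have := h.odd_dist hx hM
    grind
  obtain ⟨x, hx, hxK⟩ := (h.mem_subgeometry_iff_of_notMem hK).1 hKW
  obtain ⟨y, hy, hyL⟩ := (h.mem_subgeometry_iff_of_notMem hL).1 hLW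
  obtain rfl := h.eq_of_dist_eq_three hM hne hx hy (hthree x hx K hxK hKM) (hthree y hy L hyL hLM)
  have := h.polygon.connected.dist_triangle (u := K) (v := x) (w := L)
  have := SimpleGraph.dist_eq_one_iff_adj.2 hxK.symm
  have := SimpleGraph.dist_eq_one_iff_adj.2 hyL
  lia

theorem mem_subgeometry_of_isProj_of_notMem (h : SpecialBlockingSet G P S s t) (hK : K ∉ P)
    (hL : L ∉ P) (hKW : K ∈ subgeometry G S) (hLW : L ∈ subgeometry G S)
    (hKL : G.dist K L < 6) (hp : IsProj G K L p) : p ∈ subgeometry G S := by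
  have hpP : p ∈ P := (h.polygon.mem_iff_notMem hp.1.symm).2 hL
  have hp₂ := hp.2
  obtain ⟨M, hM⟩ := exists_isProj h.polygon.connected fun hKp : K = p => hK (hKp ▸ hpP)
  have hM₂ := hM.2
  have heven := h.polygon.even_dist_iff.2 (iff_of_false hK hL)
  have hMW : M ∈ subgeometry G S := by
    by_cases hKM : K = M
    · exact hKM ▸ hKW
    have := h.polygon.connected.dist_eq_zero_iff.not.2 hKM
    have hLM := h.polygon.connected.dist_triangle (u := L) (v := p) (w := M)
    rw [SimpleGraph.dist_eq_one_iff_adj.2 hp.1, SimpleGraph.dist_eq_one_iff_adj.2 hM.1] at hLM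
    exact h.mem_subgeometry_of_dist_le_two hK hL ((h.polygon.mem_iff_notMem hM.1).1 hpP) hKW hLW
      (by lia) (by grind) hLM
  refine h.mem_subgeometry_of_adj_of_adj hpP hMW hLW ?_ hM.1 hp.1.symm
  rintro rfl
  lia

theorem mem_subgeometry_of_isProj (h : SpecialBlockingSet G P S s t) (hu : u ∈ subgeometry G S)
    (hv : v ∈ subgeometry G S) (huv : G.dist u v < 6) (hw : IsProj G u v w) :
    w ∈ subgeometry G S := by
  by_cases hvP : v ∈ P
  · exact h.mem_subgeometry_of_adj hv hvP hw.1
  by_cases huP : u ∈ P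
  swap
  · exact h.mem_subgeometry_of_isProj_of_notMem huP hvP hu hv huv hw
  have huv' : u ≠ v := fun huv => hvP (huv ▸ huP)
  obtain ⟨K, hK⟩ := exists_isProj h.polygon.connected huv'.symm
  have hKP : K ∉ P := (h.polygon.mem_iff_notMem hK.1).1 huP
  have hKW := h.mem_subgeometry_of_adj hu huP hK.1
  have hKv : G.dist K v + 1 = G.dist u v := by rw [G.dist_comm, hK.2, G.dist_comm]
  by_cases huw : u = w
  · exact huw ▸ hu
  have hKv' : K ≠ v := by
    rintro rfl
    have := hw.2
    have := h.polygon.connected.dist_eq_zero_iff.not.2 huw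
    have := G.dist_self (v := K)
    lia
  obtain ⟨q, hq⟩ := exists_isProj h.polygon.connected hKv'
  have huq : IsProj G u v q := (h.polygon.isProj_or hq.1).resolve_right fun hd => by
    have := h.polygon.connected.dist_triangle (u := u) (v := K) (w := q)
    have := SimpleGraph.dist_eq_one_iff_adj.2 hK.1
    have := hq.2
    lia
  rw [h.polygon.isProj_unique huv hw huq]
  exact h.mem_subgeometry_of_isProj_of_notMem hKP hvP hKW hv (by lia) hq

theorem exists_adj_mem_subgeometry (h : SpecialBlockingSet G P S s t)
    (hv : v ∈ subgeometry G S) : ∃ w ∈ subgeometry G S, G.Adj v w := by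
  by_cases hvP : v ∈ P
  · obtain ⟨K, hK, -⟩ := h.exists_adj_ne_ne hvP v v
    exact ⟨K, h.mem_subgeometry_of_adj hv hvP hK, hK⟩
  · obtain ⟨x, hx, hxv⟩ := (h.mem_subgeometry_iff_of_notMem hvP).1 hv
    exact ⟨x, mem_subgeometry_of_mem hx, hxv.symm⟩

theorem isGenPolygon_induce_subgeometry (h : SpecialBlockingSet G P S s t) :
    IsGenPolygon (G.induce (subgeometry G S)) (Subtype.val ⁻¹' P) 6 := by
  obtain ⟨x, hx, -⟩ := h.exists_dist_eq
  exact h.polygon.induce ⟨x, mem_subgeometry_of_mem hx⟩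
    (fun u hu v hv huv w hw => h.mem_subgeometry_of_isProj hu hv huv hw)
    fun v hv => h.exists_adj_mem_subgeometry hv

theorem encard_inter_subgeometry_of_mem (h : SpecialBlockingSet G P S s t)
    (hp : p ∈ subgeometry G S) (hpP : p ∈ P) :
    (G.neighborSet p ∩ subgeometry G S).encard = t + 1 := by
  have hsub : G.neighborSet p ⊆ subgeometry G S := fun K hK => h.mem_subgeometry_of_adj hp hpP hK
  rw [Set.inter_eq_left.2 hsub, h.biregular.encard_of_mem p hpP]

theorem exists_dist_eq_six (h : SpecialBlockingSet G P S s t) (hx : x ∈ S) (hz : z ∈ S)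
    (hxz : G.dist x z = 6) (hy : y ∈ S) : ∃ w ∈ subgeometry G S, G.dist w y = 6 := by
  by_cases hyx : G.dist x y = 6
  · exact ⟨x, mem_subgeometry_of_mem hx, hyx⟩
  by_cases hyx' : x = y
  · exact ⟨z, mem_subgeometry_of_mem hz, by rw [← hyx', G.dist_comm, hxz]⟩
  have hxy : G.dist y x = 4 := by
    have := h.four_le_dist hx hy hyx'
    have := h.polygon.dist_le x y
    have := h.even_dist hx (h.subset hy)
    rw [G.dist_comm]
    grind
  obtain ⟨K, hK⟩ := exists_isProj h.polygon.connected (Ne.symm hyx')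
  obtain ⟨N, hN, hNK, -⟩ := h.exists_adj_ne_ne (h.subset hx) K K
  have hyN := h.polygon.dist_eq_of_ne (by lia) hK hN hNK
  have hzx : G.dist z x = 6 := G.dist_comm.trans hxz
  have hzN := (h.polygon.isProj_of_dist_eq hzx hN).2
  obtain ⟨w, hw⟩ := exists_isProj h.polygon.connected (u := z) (v := N)
    fun hzN' => by simp [← hzN', hzx] at hzN
  have hw₂ := hw.2
  refine ⟨w, h.mem_subgeometry_of_isProj (mem_subgeometry_of_mem hz)
    (h.mem_subgeometry_of_adj (mem_subgeometry_of_mem hx) (h.subset hx) hN) (by lia) hw, ?_⟩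
  rw [G.dist_comm, h.polygon.dist_eq_of_ne (by lia) ⟨hN.symm, hyN.symm⟩ hw.1, hyN, hxy]
  rintro rfl
  rw [G.dist_comm] at hw₂
  lia

theorem nontrivial_inter_subgeometry (h : SpecialBlockingSet G P S s t) (hx : x ∈ S) (hz : z ∈ S)
    (hxz : G.dist x z = 6) (hv : v ∈ subgeometry G S) :
    (G.neighborSet v ∩ subgeometry G S).Nontrivial := by
  by_cases hvP : v ∈ P
  · rw [← Set.one_lt_encard_iff_nontrivial, h.encard_inter_subgeometry_of_mem hv hvP]
    exact_mod_cast Nat.lt_succ_of_lt h.one_lt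
  obtain ⟨y, hy, hyv⟩ := (h.mem_subgeometry_iff_of_notMem hvP).1 hv
  obtain ⟨w, hw, hwy⟩ := h.exists_dist_eq_six hx hz hxz hy
  have hwv := (h.polygon.isProj_of_dist_eq hwy hyv).2
  obtain ⟨q, hq⟩ := exists_isProj h.polygon.connected (u := w) (v := v)
    fun hwv' => by simp [← hwv', hwy] at hwv
  refine ⟨y, ⟨hyv.symm, mem_subgeometry_of_mem hy⟩, q,
    ⟨hq.1, h.mem_subgeometry_of_isProj hw hv (by lia) hq⟩, ?_⟩
  rintro rfl
  have := hq.2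
  lia

theorem exists_three_le_encard_inter_subgeometry (h : SpecialBlockingSet G P S s t) (hx : x ∈ S)
    (hz : z ∈ S) (hxz : G.dist x z = 6) : ∃ K ∈ subgeometry G S, K ∉ P ∧
      3 ≤ (G.neighborSet K ∩ subgeometry G S).encard := by
  have hproj : ∀ {u}, u ∈ subgeometry G S → 0 < G.dist z u → G.dist z u < 6 →
      ∃ w ∈ subgeometry G S, IsProj G z u w := fun hu hpos hlt => by
    obtain ⟨w, hw⟩ := exists_isProj h.polygon.connected
      (h.polygon.connected.dist_eq_zero_iff.not.1 hpos.ne')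
    exact ⟨w, h.mem_subgeometry_of_isProj (mem_subgeometry_of_mem hz) hu hlt hw, hw⟩
  obtain ⟨N, hN, -⟩ := h.exists_adj_ne_ne (h.subset hx) x x
  have hzx : G.dist z x = 6 := G.dist_comm.trans hxz
  have hzN := (h.polygon.isProj_of_dist_eq hzx hN).2
  have hNW := h.mem_subgeometry_of_adj (mem_subgeometry_of_mem hx) (h.subset hx) hN
  obtain ⟨v, hvW, hv⟩ := hproj hNW (by lia) (by lia)
  have hv₂ := hv.2
  obtain ⟨K, hKW, hK⟩ := hproj hvW (by lia) (by lia)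
  have hK₂ := hK.2
  obtain ⟨w, hwW, hw⟩ := hproj hKW (by lia) (by lia)
  have hw₂ := hw.2
  have hKP : K ∉ P := fun hKP => by
    have := h.even_dist hz hKP
    grind
  obtain ⟨y, hy, hyK⟩ := (h.mem_subgeometry_iff_of_notMem hKP).1 hKW
  have hvy : v ≠ y := by
    rintro rfl
    have hxv := h.polygon.connected.dist_triangle (u := x) (v := N) (w := v)
    rw [SimpleGraph.dist_eq_one_iff_adj.2 hN, SimpleGraph.dist_eq_one_iff_adj.2 hv.1] at hxv
    by_cases hxv' : x = v
    · rw [← hxv', G.dist_comm] at hv₂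
      lia
    · have := h.four_le_dist hx hy hxv'
      lia
  have hwy : w ≠ y := by
    rintro rfl
    exact h.dist_ne_two z hz w hy (by lia)
  have hvw : v ≠ w := by
    rintro rfl
    lia
  refine ⟨K, hKW, hKP, (Set.encard_eq_three.2 ⟨v, w, y, hvw, hvy, hwy, rfl⟩).ge.trans
    (Set.encard_le_encard ?_)⟩
  simp [Set.insert_subset_iff, hK.1.symm, hw.1, hyK.symm, hvW, hwW, mem_subgeometry_of_mem hy]

theorem exists_isBiregular_induce_subgeometry (h : SpecialBlockingSet G P S s t) (hx : x ∈ S)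
    (hz : z ∈ S) (hxz : G.dist x z = 6) : ∃ a, 1 < a ∧
      IsBiregular (G.induce (subgeometry G S)) (Subtype.val ⁻¹' P) a t := by
  obtain ⟨K, hKW, hK, hthree⟩ := h.exists_three_le_encard_inter_subgeometry hx hz hxz
  have hmem : ∀ p ∈ Subtype.val ⁻¹' P,
      ((G.induce (subgeometry G S)).neighborSet p).encard = t + 1 := fun p hp => by
    rw [encard_neighborSet_induce, h.encard_inter_subgeometry_of_mem p.2 hp]
  have hnontrivial : ∀ v, ((G.induce (subgeometry G S)).neighborSet v).Nontrivial := fun v => by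
    rw [← Set.one_lt_encard_iff_nontrivial, encard_neighborSet_induce,
      Set.one_lt_encard_iff_nontrivial]
    exact h.nontrivial_inter_subgeometry hx hz hxz v.2
  have hfin : (G.neighborSet K ∩ subgeometry G S).Finite :=
    (h.biregular.finite_neighborSet K).inter_of_left _
  obtain ⟨n, hn⟩ := ENat.ne_top_iff_exists.1 (Set.encard_ne_top_iff.2 hfin)
  rw [← hn] at hthree
  have hthree' : 3 ≤ n := by exact_mod_cast hthree
  refine ⟨n - 1, by lia, hmem, fun L hL => ?_⟩
  rw [h.isGenPolygon_induce_subgeometry.encard_neighborSet_eq_of_notMem (by norm_num) hnontrivial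
    (fun p hp => ?_) hL (v := ⟨K, hKW⟩) hK, encard_neighborSet_induce, ← hn]
  · exact_mod_cast (by lia : n = n - 1 + 1)
  · rw [hmem p hp]
    exact_mod_cast Nat.succ_le_succ h.one_lt

end SpecialBlockingSet

theorem not_isSquare_mul_of_eq_add_sq {a s t : ℕ} (ha : 1 < a) (ht : 0 < t)
    (hs : s = a * t + (a * t) ^ 2) (hat : IsSquare (a * t)) : ¬ IsSquare (s * t) := by
  rintro ⟨m, hm⟩
  obtain ⟨n, hn⟩ := hat
  have hm' : t ^ 2 * (a * (1 + a * t)) = m ^ 2 := by rw [pow_two m, ← hm, hs]; ring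
  obtain ⟨c, rfl⟩ : t ∣ m := (Nat.pow_dvd_pow_iff two_ne_zero).1 ⟨_, hm'.symm⟩
  rw [mul_pow] at hm'
  have hc : (1 + a * t) * a = c ^ 2 := by
    rw [mul_comm, Nat.eq_of_mul_eq_mul_left (by positivity) hm']
  have hcoprime : IsUnit (gcd (1 + a * t) a) := Nat.isUnit_iff.2 (show Nat.gcd _ _ = 1 by simp)
  obtain ⟨d, hd⟩ := exists_eq_pow_of_mul_eq_pow hcoprime hc
  have hn₀ : 0 < n := Nat.pos_of_ne_zero fun hn₀ => by
    rw [hn₀, mul_zero, mul_eq_zero] at hn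
    lia
  have hnd : n < d := lt_of_mul_self_lt_mul_self₀ (Nat.zero_le d) (by lia)
  nlinarith

namespace SpecialBlockingSet

variable {V : Type*} {G : SimpleGraph V} {P S : Set V} {a s t : ℕ} {x y z K : V}

theorem eq_of_adj_of_adj (h : SpecialBlockingSet G P S s t) (hx : x ∈ S) (hy : y ∈ S)
    (hxK : G.Adj x K) (hyK : G.Adj y K) : x = y := by
  by_contra hxy
  have := h.four_le_dist hx hy hxy
  have := h.polygon.connected.dist_triangle (u := x) (v := K) (w := y)
  have := SimpleGraph.dist_eq_one_iff_adj.2 hxK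
  have := SimpleGraph.dist_eq_one_iff_adj.2 hyK.symm
  lia

/-- Each line of the subgeometry contains exactly one member of `S`. -/
theorem card_notMem_subgeometry (h : SpecialBlockingSet G P S s t) [Fintype (subgeometry G S)]
    [DecidablePred (· ∈ P)]
    (hW : IsBiregular (G.induce (subgeometry G S)) (Subtype.val ⁻¹' P) a t) :
    Finset.card {K : subgeometry G S | (K : V) ∉ P} = (s + 1) * (t + 1) := by
  classical
  have hS : Finset.card {x : subgeometry G S | (x : V) ∈ S} = s + 1 := by
    have hcard : (Subtype.val '' {x : subgeometry G S | (x : V) ∈ S}).encard = s + 1 := by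
      rw [← h.encard_eq]
      congr 1
      ext x
      simpa using fun hx : x ∈ S => mem_subgeometry_of_mem hx
    rw [Subtype.val_injective.encard_image, Set.encard_eq_coe_toFinset_card] at hcard
    rw [← Set.toFinset_ofPred]
    exact_mod_cast hcard
  rw [← hS, ← mul_one (Finset.card _)]
  refine (Finset.card_mul_eq_card_mul (G.induce (subgeometry G S)).Adj (fun x hx => ?_)
    fun K hK => ?_).symm
  · have hx : (x : V) ∈ S := by simpa using hx
    rw [← hW.degree_of_mem (v := x) (h.subset hx), ← SimpleGraph.card_neighborFinset_eq_degree]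
    congr 1
    ext K
    simpa [Finset.mem_bipartiteAbove] using
      fun hxK => (h.polygon.mem_iff_notMem hxK).1 (h.subset hx)
  · have hK : (K : V) ∉ P := by simpa using hK
    obtain ⟨x, hx, hxK⟩ := (h.mem_subgeometry_iff_of_notMem hK).1 K.2
    refine Finset.card_eq_one.2 ⟨⟨x, mem_subgeometry_of_mem hx⟩, ?_⟩
    ext y
    simp only [Finset.mem_bipartiteBelow, Finset.mem_filter, Finset.mem_univ, true_and,
      Finset.mem_singleton, Subtype.ext_iff]
    refine ⟨fun hy => h.eq_of_adj_of_adj hy.1 hx hy.2 hxK, ?_⟩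
    intro hyx
    exact ⟨hyx ▸ hx, show G.Adj y K from hyx ▸ hxK⟩

theorem eq_add_sq_of_isBiregular_induce (h : SpecialBlockingSet G P S s t)
    [Finite (subgeometry G S)]
    (hW : IsBiregular (G.induce (subgeometry G S)) (Subtype.val ⁻¹' P) a t) :
    s = a * t + (a * t) ^ 2 := by
  classical
  have := Fintype.ofFinite (subgeometry G S)
  obtain ⟨x, hx, -⟩ := h.exists_dist_eq
  have hodd := h.isGenPolygon_induce_subgeometry.card_odd_dist hW ⟨x, mem_subgeometry_of_mem hx⟩
  rw [hW.degree_of_mem (h.subset hx)] at hodd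
  have hlines := h.card_notMem_subgeometry hW
  have hiff : ∀ v : subgeometry G S,
      Odd ((G.induce (subgeometry G S)).dist ⟨x, mem_subgeometry_of_mem hx⟩ v) ↔ (v : V) ∉ P :=
    fun v => by
      rw [← Nat.not_even_iff_odd, h.isGenPolygon_induce_subgeometry.even_dist_iff]
      simp [h.subset hx]
  simp only [hiff] at hodd
  rw [hlines, mul_comm] at hodd
  have := Nat.eq_of_mul_eq_mul_left t.succ_pos hodd
  lia

theorem dist_ne_six (h : SpecialBlockingSet G P S s t) (hx : x ∈ S) (hz : z ∈ S) :
    G.dist x z ≠ 6 := by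
  intro hxz
  have := h.polygon.finite_of_finite_neighborSet h.biregular.finite_neighborSet
  obtain ⟨a, ha, hW⟩ := h.exists_isBiregular_induce_subgeometry hx hz hxz
  have hs := h.eq_add_sq_of_isBiregular_induce hW
  have := h.one_lt
  refine not_isSquare_mul_of_eq_add_sq ha (by lia) hs ?_ ?_
  · exact h.isGenPolygon_induce_subgeometry.isSquare_mul_of_isBiregular hW ha h.one_lt
  · exact h.polygon.isSquare_mul_of_isBiregular h.biregular (by nlinarith) h.one_lt

end SpecialBlockingSet

namespace GenHexagon

variable {Γ : GenHexagon} {x y : Γ.Point} {s t : ℕ}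

/-- The vertices of the incidence graph that are points. -/
def pointSet (Γ : GenHexagon) : Set (Γ.Point ⊕ Γ.Line) := Set.range Sum.inl

@[simp]
theorem inl_mem_pointSet : Sum.inl x ∈ Γ.pointSet := ⟨x, rfl⟩

@[simp]
theorem inr_notMem_pointSet {L : Γ.Line} : Sum.inr L ∉ Γ.pointSet := by
  simp [pointSet]

@[simp]
theorem incGraph_adj_inl_inr {L : Γ.Line} :
    Γ.incGraph.Adj (Sum.inl x) (Sum.inr L) ↔ x ∈ Γ.pts L := .rfl

@[simp]
theorem incGraph_adj_inr_inl {L : Γ.Line} :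
    Γ.incGraph.Adj (Sum.inr L) (Sum.inl x) ↔ x ∈ Γ.pts L := .rfl

theorem mem_pointSet_iff_notMem_of_adj : ∀ {v w}, Γ.incGraph.Adj v w →
    (v ∈ Γ.pointSet ↔ w ∉ Γ.pointSet)
  | Sum.inl _, Sum.inr _, _ => by simp
  | Sum.inr _, Sum.inl _, _ => by simp
  | Sum.inl _, Sum.inl _, h => h.elim
  | Sum.inr _, Sum.inr _, h => h.elim

theorem IsGenHexagon.isGenPolygon (hΓ : Γ.IsGenHexagon) :
    IsGenPolygon Γ.incGraph Γ.pointSet 6 := by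
  have : Nontrivial (Γ.Point ⊕ Γ.Line) :=
    SimpleGraph.nontrivial_of_ediam_ne_zero (G := Γ.incGraph) (by simp [hΓ.1])
  exact .of_ediam_le_of_le_egirth mem_pointSet_iff_notMem_of_adj hΓ.1.le (by simp [hΓ.2])

theorem HasOrder.isBiregular (hord : Γ.HasOrder s t) :
    IsBiregular Γ.incGraph Γ.pointSet s t where
  encard_of_mem := by
    rintro - ⟨x, rfl⟩
    rw [← hord.2 x, ← Sum.inr_injective.encard_image {L | x ∈ Γ.pts L}]
    congr 1
    ext (y | L)
    · simpa using fun h : Γ.incGraph.Adj (Sum.inl x) (Sum.inl y) => h.elim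
    · simp
  encard_of_notMem := by
    rintro (x | L) hL
    · exact absurd inl_mem_pointSet hL
    rw [← hord.1 L, ← Sum.inl_injective.encard_image (Γ.pts L)]
    congr 1
    ext (y | M)
    · simp
    · simpa using fun h : Γ.incGraph.Adj (Sum.inr L) (Sum.inr M) => h.elim

theorem IsGenHexagon.even_dist (hΓ : Γ.IsGenHexagon) :
    Even (Γ.incGraph.dist (Sum.inl x) (Sum.inl y)) := by
  simp [hΓ.isGenPolygon.even_dist_iff]

theorem IsGenHexagon.dist_eq_zero_iff (hΓ : Γ.IsGenHexagon) :
    Γ.incGraph.dist (Sum.inl x) (Sum.inl y) = 0 ↔ x = y := by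
  rw [hΓ.isGenPolygon.connected.dist_eq_zero_iff, Sum.inl_injective.eq_iff]

theorem IsGenHexagon.exists_mem_pts_dist_add_two (hΓ : Γ.IsGenHexagon) (hxy : x ≠ y) :
    ∃ L, ∃ z ∈ Γ.pts L, y ∈ Γ.pts L ∧ Γ.incGraph.dist (Sum.inl x) (Sum.inl z) + 2 =
      Γ.incGraph.dist (Sum.inl x) (Sum.inl y) := by
  have hconn := hΓ.isGenPolygon.connected
  obtain ⟨z | L, hL⟩ := exists_isProj hconn (Sum.inl_injective.ne hxy)
  · exact hL.1.elim
  obtain ⟨z | M, hz⟩ := exists_isProj hconn (Sum.inl_ne_inr (a := x) (b := L))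
  · exact ⟨L, z, hz.1, hL.1, by have := hz.2; have := hL.2; lia⟩
  · exact hz.1.elim

theorem IsGenHexagon.collinear_iff (hΓ : Γ.IsGenHexagon) :
    Γ.Collinear x y ↔ Γ.incGraph.dist (Sum.inl x) (Sum.inl y) = 2 := by
  constructor
  · rintro ⟨hxy, L, hx, hy⟩
    have htri := hΓ.isGenPolygon.connected.dist_triangle (u := Sum.inl x) (v := Sum.inr L)
      (w := Sum.inl y)
    rw [SimpleGraph.dist_eq_one_iff_adj.2 (incGraph_adj_inl_inr.2 hx),
      SimpleGraph.dist_eq_one_iff_adj.2 (incGraph_adj_inr_inl.2 hy)] at htri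
    have := hΓ.dist_eq_zero_iff.not.2 hxy
    have := hΓ.even_dist (x := x) (y := y)
    grind
  · intro hd
    have hxy : x ≠ y := fun hxy => by simp [hΓ.dist_eq_zero_iff.2 hxy] at hd
    obtain ⟨L, z, hz, hy, hzd⟩ := hΓ.exists_mem_pts_dist_add_two hxy
    obtain rfl : x = z := hΓ.dist_eq_zero_iff.1 (by lia)
    exact ⟨hxy, L, hz, hy⟩

theorem IsGenHexagon.special_iff (hΓ : Γ.IsGenHexagon) :
    Γ.Special x y ↔ Γ.incGraph.dist (Sum.inl x) (Sum.inl y) = 4 := by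
  constructor
  · rintro ⟨hxy, hncol, z, hxz, hyz⟩
    have htri := hΓ.isGenPolygon.connected.dist_triangle (u := Sum.inl x) (v := Sum.inl z)
      (w := Sum.inl y)
    rw [hΓ.collinear_iff.1 hxz, SimpleGraph.dist_comm (u := Sum.inl z),
      hΓ.collinear_iff.1 hyz] at htri
    have := hΓ.dist_eq_zero_iff.not.2 hxy
    have := hΓ.collinear_iff.not.1 hncol
    have := hΓ.even_dist (x := x) (y := y)
    grind
  · intro hd
    have hxy : x ≠ y := fun hxy => by simp [hΓ.dist_eq_zero_iff.2 hxy] at hd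
    obtain ⟨L, z, hz, hy, hzd⟩ := hΓ.exists_mem_pts_dist_add_two hxy
    have hyz : y ≠ z := by
      rintro rfl
      lia
    exact ⟨hxy, hΓ.collinear_iff.not.2 (by lia), z, hΓ.collinear_iff.2 (by lia), hyz, L, hy, hz⟩

theorem IsGenHexagon.opposite_iff (hΓ : Γ.IsGenHexagon) :
    Γ.Opposite x y ↔ Γ.incGraph.dist (Sum.inl x) (Sum.inl y) = 6 := by
  have := hΓ.isGenPolygon.dist_le (Sum.inl x) (Sum.inl y)
  have := hΓ.even_dist (x := x) (y := y)
  rw [Opposite, ne_eq, ← hΓ.dist_eq_zero_iff, hΓ.collinear_iff, hΓ.special_iff]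
  grind

theorem IsGenHexagon.specialBlockingSet (hΓ : Γ.IsGenHexagon) (ht : 1 < t)
    (hord : Γ.HasOrder s t) {S : Set Γ.Point} (hS : S.encard = s + 1)
    (hblock : ¬ ∃ y : Γ.Point, ∀ x ∈ S, Γ.Opposite y x)
    (hncol : ∀ x ∈ S, ∀ y ∈ S, ¬ Γ.Collinear x y) (hspec : ∃ x ∈ S, ∃ y ∈ S, Γ.Special x y) :
    SpecialBlockingSet Γ.incGraph Γ.pointSet (Sum.inl '' S) s t where
  polygon := hΓ.isGenPolygon
  biregular := hord.isBiregular
  one_lt := ht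
  subset := by
    rintro - ⟨x, -, rfl⟩
    exact inl_mem_pointSet
  encard_eq := by rw [Sum.inl_injective.encard_image, hS]
  exists_dist_le := by
    rintro - ⟨y, rfl⟩
    push Not at hblock
    obtain ⟨x, hx, hyx⟩ := hblock y
    refine ⟨Sum.inl x, Set.mem_image_of_mem _ hx, ?_⟩
    rw [hΓ.opposite_iff, SimpleGraph.dist_comm] at hyx
    have := hΓ.isGenPolygon.dist_le (Sum.inl x) (Sum.inl y)
    have := hΓ.even_dist (x := x) (y := y)
    grind
  dist_ne_two := by
    rintro - ⟨x, hx, rfl⟩ - ⟨y, hy, rfl⟩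
    exact hΓ.collinear_iff.not.1 (hncol x hx y hy)
  exists_dist_eq := by
    obtain ⟨x, hx, y, hy, hxy⟩ := hspec
    exact ⟨_, Set.mem_image_of_mem _ hx, _, Set.mem_image_of_mem _ hy, hΓ.special_iff.1 hxy⟩

end GenHexagon

/-- Claim 6 in the proof: if no two points of `S` are collinear and `S` contains an
opposite pair, then no two points of `S` are special. -/
theorem claim6_no_special_pairs (Γ : GenHexagon) (hΓ : Γ.IsGenHexagon)
    (s t : ℕ) (hs : 1 < s) (ht : 1 < t) (hord : Γ.HasOrder s t)
    (S : Set Γ.Point) (hS : S.encard = s + 1)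
    (hblock : ¬ ∃ y : Γ.Point, ∀ x ∈ S, Γ.Opposite y x)
    (hncol : ∀ x ∈ S, ∀ y ∈ S, ¬ Γ.Collinear x y)
    (hopp : ∃ x ∈ S, ∃ y ∈ S, Γ.Opposite x y) :
    ∀ x ∈ S, ∀ y ∈ S, ¬ Γ.Special x y := by
  intro a ha b hb hab
  obtain ⟨x, hx, z, hz, hxz⟩ := hopp
  have hblocking := hΓ.specialBlockingSet ht hord hS hblock hncol ⟨a, ha, b, hb, hab⟩
  exact hblocking.dist_ne_six (Set.mem_image_of_mem _ hx) (Set.mem_image_of_mem _ hz)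
    (hΓ.opposite_iff.1 hxz)
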